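/- arXiv:2201.06183 — 3 statements merged into one kernel-verified Lean document; each statement's English description precedes it below -/
import Mathlib

section
/- Let M be an m×n real matrix with all entries positive and let a ∈ ℝ^m, p ∈ ℝ^n have all entries positive with ∑_{i=1}^m a_i = ∑_{j=1}^n p_j. Then the two sequences of matrices M^{(k,p)} and M^{(k,a)} produced by the market-invariant (RAS) iteration both converge entrywise as k → ∞, and they converge to a common limit A^$. The limit A^$ has all entries positive, satisfies ∑_{j=1}^n A^$_{ij} = a_i for every i and ∑_{i=1}^m A^$_{ij} = p_j for every j, and there exist vectors x' ∈ ℝ^m and p' ∈ ℝ^n with all entries positive such that A^$_{ij} = x'_i M_{ij} p'_j for all i, j. -/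
/-!
Let `r` be the row factors `a i / ∑ j, B i j` of a positive matrix `B` with column sums `p`. Scaling
the rows of `B` by `r` turns its column sums into `p j` times the average of `r` with weights
`B i j / p j`, so the inverses of the next column factors are averages of `r`; in the same way the
inverses of the next row factors are averages of the column factors. Hence an interval `[l, u]`
containing all row factors keeps containing them. The cross ratios of `B` never change, which bounds
the weights below by some `δ > 0`, so each step shortens the interval by the factor `1 - δ`. The
factors therefore converge geometrically, to `1` because their average with respect to the row sums
of `B` is `1`. So the iterates converge to a positive matrix with the right marginals, and this
matrix has the cross ratios of `M`, which makes it biproportional to `M`.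
-/

open Filter Set Topology
open scoped Matrix

section Averages

variable {ι : Type*} [Fintype ι] {w f : ι → ℝ} {l u δ : ℝ} {s : ι}

lemma sum_div_eq_one {c : ℝ} (hc : c ≠ 0) (hw : ∑ i, w i = c) : ∑ i, w i / c = 1 := by
  rw [← Finset.sum_div, hw, div_self hc]

lemma sum_mul_mem_Icc (hw : ∀ i, 0 ≤ w i) (hw1 : ∑ i, w i = 1) (hf : ∀ i, f i ∈ Icc l u) :
    ∑ i, w i * f i ∈ Icc l u :=
  (convex_Icc l u).sum_mem (fun i _ => hw i) hw1 fun i _ => hf i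

lemma add_mul_sub_le_sum_mul (hw : ∀ i, 0 ≤ w i) (hw1 : ∑ i, w i = 1) (hf : ∀ i, l ≤ f i)
    (hδ : δ ≤ w s) : l + δ * (f s - l) ≤ ∑ i, w i * f i := by
  have hf' : ∀ i, 0 ≤ f i - l := fun i => sub_nonneg.2 (hf i)
  calc l + δ * (f s - l) ≤ l + w s * (f s - l) := by gcongr; exact hf' s
    _ ≤ l + ∑ i, w i * (f i - l) := by
        gcongr
        exact Finset.single_le_sum (f := fun i => w i * (f i - l))
          (fun i _ => mul_nonneg (hw i) (hf' i)) (Finset.mem_univ s)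
    _ = ∑ i, w i * f i := by
        simp only [mul_sub, Finset.sum_sub_distrib, ← Finset.sum_mul, hw1]
        ring

lemma sum_mul_mem_Icc_of_le_weight (hw : ∀ i, 0 ≤ w i) (hw1 : ∑ i, w i = 1)
    (hf : ∀ i, f i ∈ Icc l u) (hδ : δ ≤ w s) :
    ∑ i, w i * f i ∈ Icc (l + δ * (f s - l)) (u - δ * (u - f s)) := by
  refine ⟨add_mul_sub_le_sum_mul hw hw1 (fun i => (hf i).1) hδ, ?_⟩
  have h := add_mul_sub_le_sum_mul (f := fun i => -f i) hw hw1 (fun i => neg_le_neg (hf i).2) hδ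
  simp only [mul_neg, Finset.sum_neg_distrib] at h
  linarith

end Averages

lemma inv_mem_Icc_inv {l u x : ℝ} (hl : 0 < l) (hx : x ∈ Icc l u) : x⁻¹ ∈ Icc u⁻¹ l⁻¹ :=
  ⟨inv_anti₀ (hl.trans_le hx.1) hx.2, inv_anti₀ hl hx.1⟩

lemma sum_eq_of_tendsto {ι α : Type*} [Fintype ι] {F : Filter α} [F.NeBot] {f : α → ι → ℝ}
    {g : ι → ℝ} {c : ℝ} (hf : ∀ i, Tendsto (fun k => f k i) F (𝓝 (g i)))
    (hc : ∀ᶠ k in F, ∑ i, f k i = c) : ∑ i, g i = c :=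
  tendsto_nhds_unique (tendsto_finsetSum _ fun i _ => hf i)
    (tendsto_const_nhds.congr' (hc.mono fun _ h => h.symm))

lemma nonempty_of_sum_eq_sum {ι κ : Type*} [Fintype ι] [Fintype κ] [Nonempty ι] {a : ι → ℝ}
    {p : κ → ℝ} (ha : ∀ i, 0 < a i) (hsum : ∑ i, a i = ∑ j, p j) : Nonempty κ := by
  have hpos : 0 < ∑ j, p j := hsum ▸ Finset.sum_pos (fun i _ => ha i) Finset.univ_nonempty
  obtain ⟨j, -, -⟩ := Finset.exists_ne_zero_of_sum_ne_zero hpos.ne'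
  exact ⟨j⟩

lemma eq_iterate_of_succ_eq {α : Type*} {f : α → α} {P : ℕ → α} {n : ℕ}
    (hP : ∀ k, n ≤ k → P (k + 1) = f (P k)) (k : ℕ) : P (k + n) = f^[k] (P n) := by
  induction k with
  | zero => rw [zero_add, Function.iterate_zero_apply]
  | succ k ih =>
    rw [Function.iterate_succ_apply', ← ih, Nat.add_right_comm, hP _ (Nat.le_add_left n k)]

variable {ι κ : Type*}

/-- `A` is biproportional to `M` if it arises from `M` by multiplying the rows and the columns by
positive factors. -/
def Biproportional (M A : Matrix ι κ ℝ) : Prop :=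
  ∃ x : ι → ℝ, ∃ y : κ → ℝ, (∀ i, 0 < x i) ∧ (∀ j, 0 < y j) ∧ ∀ i j, A i j = x i * M i j * y j

namespace Biproportional

variable {L M A : Matrix ι κ ℝ}

lemma refl (M : Matrix ι κ ℝ) : Biproportional M M :=
  ⟨1, 1, fun _ => one_pos, fun _ => one_pos, fun i j => by simp⟩

lemma trans (h : Biproportional L M) (h' : Biproportional M A) : Biproportional L A := by
  obtain ⟨x, y, hx, hy, hM⟩ := h
  obtain ⟨x', y', hx', hy', hA⟩ := h'
  exact ⟨x' * x, y * y', fun i => mul_pos (hx' i) (hx i), fun j => mul_pos (hy j) (hy' j),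
    fun i j => by simp only [hA, hM, Pi.mul_apply]; ring⟩

lemma transpose (h : Biproportional M A) : Biproportional Mᵀ Aᵀ := by
  obtain ⟨x, y, hx, hy, hA⟩ := h
  exact ⟨y, x, hy, hx, fun j i => by simp only [Matrix.transpose_apply, hA]; ring⟩

lemma pos (h : Biproportional M A) (hM : ∀ i j, 0 < M i j) (i : ι) (j : κ) : 0 < A i j := by
  obtain ⟨x, y, hx, hy, hA⟩ := h
  exact hA i j ▸ mul_pos (mul_pos (hx i) (hM i j)) (hy j)

lemma cross_mul_eq (h : Biproportional M A) (i s : ι) (j t : κ) :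
    A i j * A s t * (M i t * M s j) = A i t * A s j * (M i j * M s t) := by
  obtain ⟨x, y, -, -, hA⟩ := h
  simp only [hA]
  ring

lemma of_cross_mul_eq (hM : ∀ i j, 0 < M i j) (hA : ∀ i j, 0 < A i j) (s : ι) (t : κ)
    (h : ∀ i j, A i j * A s t * (M i t * M s j) = A i t * A s j * (M i j * M s t)) :
    Biproportional M A := by
  refine ⟨fun i => A i t / M i t, fun j => A s j / M s j * (M s t / A s t),
    fun i => div_pos (hA i t) (hM i t),
    fun j => mul_pos (div_pos (hA s j) (hM s j)) (div_pos (hM s t) (hA s t)), fun i j => ?_⟩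
  have hMit := (hM i t).ne'
  have hMsj := (hM s j).ne'
  have hAst := (hA s t).ne'
  field_simp
  linear_combination h i j

lemma of_tendsto [Nonempty ι] [Nonempty κ] {α : Type*} {F : Filter α} [F.NeBot]
    {B : α → Matrix ι κ ℝ} (hM : ∀ i j, 0 < M i j) (hA : ∀ i j, 0 < A i j)
    (hB : ∀ᶠ k in F, Biproportional M (B k))
    (hlim : ∀ i j, Tendsto (fun k => B k i j) F (𝓝 (A i j))) : Biproportional M A := by
  obtain ⟨s⟩ := ‹Nonempty ι›
  obtain ⟨t⟩ := ‹Nonempty κ›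
  refine of_cross_mul_eq hM hA s t fun i j => ?_
  exact tendsto_nhds_unique_of_eventuallyEq (((hlim i j).mul (hlim s t)).mul_const _)
    (((hlim i t).mul (hlim s j)).mul_const _) (hB.mono fun k hk => hk.cross_mul_eq i s j t)

lemma cross_mul_le (h : Biproportional M A) (hM : ∀ i j, 0 < M i j) {c : ℝ} {i s : ι} {j t : κ}
    (hc : c ≤ M i j * M s t / (M i t * M s j)) : c * (A i t * A s j) ≤ A i j * A s t := by
  have hden : 0 < M i t * M s j := mul_pos (hM i t) (hM s j)
  calc c * (A i t * A s j) ≤ M i j * M s t / (M i t * M s j) * (A i t * A s j) := by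
        gcongr
        exact (mul_pos (h.pos hM i t) (h.pos hM s j)).le
    _ = A i t * A s j * (M i j * M s t) / (M i t * M s j) := by ring
    _ = A i j * A s t := by rw [← h.cross_mul_eq, mul_div_cancel_right₀ _ hden.ne']

end Biproportional

lemma exists_pos_mul_rowSum_mul_colSum_le [Fintype ι] [Fintype κ] [Nonempty ι] [Nonempty κ]
    {M : Matrix ι κ ℝ} (hM : ∀ i j, 0 < M i j) :
    ∃ c > 0, ∀ A, Biproportional M A → ∀ i j,
      c * ((∑ t, A i t) * ∑ s, A s j) ≤ A i j * ∑ t, ∑ s, A s t := by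
  let crossRatio : ι × κ × ι × κ → ℝ := fun q =>
    M q.1 q.2.1 * M q.2.2.1 q.2.2.2 / (M q.1 q.2.2.2 * M q.2.2.1 q.2.1)
  obtain ⟨q, hq⟩ := Finite.exists_min crossRatio
  refine ⟨crossRatio q, div_pos (mul_pos (hM _ _) (hM _ _)) (mul_pos (hM _ _) (hM _ _)),
    fun A hA i j => ?_⟩
  simp only [Finset.sum_mul_sum]
  simp only [Finset.mul_sum]
  exact Finset.sum_le_sum fun t _ => Finset.sum_le_sum fun s _ =>
    hA.cross_mul_le hM (hq (i, j, s, t))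

lemma le_colSum [Fintype ι] {B : Matrix ι κ ℝ} (hB : ∀ i j, 0 < B i j) (i : ι) (j : κ) :
    B i j ≤ ∑ s, B s j :=
  Finset.single_le_sum (f := fun s => B s j) (fun s _ => (hB s j).le) (Finset.mem_univ i)

section Steps

variable [Fintype κ]

/-- The factors by which the rows of `B` must be multiplied to have sums `a`; the column factors
are those of `Bᵀ`. -/
noncomputable def rowFactor (a : ι → ℝ) (B : Matrix ι κ ℝ) (i : ι) : ℝ :=
  a i / ∑ t, B i t

/-- The matrix obtained from `B` by scaling its rows to have sums `a`. -/
noncomputable def fitRows (a : ι → ℝ) (B : Matrix ι κ ℝ) : Matrix ι κ ℝ :=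
  Matrix.of fun i j => B i j * rowFactor a B i

/-- The matrix obtained from `B` by scaling its columns to have sums `p`. -/
noncomputable def fitCols [Fintype ι] (p : κ → ℝ) (B : Matrix ι κ ℝ) : Matrix ι κ ℝ :=
  (fitRows p Bᵀ)ᵀ

/-- One full step of the RAS iteration: fit the rows to `a`, then the columns to `p`. -/
noncomputable def rasStep [Fintype ι] (a : ι → ℝ) (p : κ → ℝ) (B : Matrix ι κ ℝ) :
    Matrix ι κ ℝ :=
  fitCols p (fitRows a B)

variable {a : ι → ℝ} {p : κ → ℝ} {B : Matrix ι κ ℝ}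

lemma fitRows_apply (a : ι → ℝ) (B : Matrix ι κ ℝ) (i : ι) (j : κ) :
    fitRows a B i j = B i j * rowFactor a B i :=
  rfl

section Rows

variable [Nonempty κ]

lemma rowSum_pos (hB : ∀ i j, 0 < B i j) (i : ι) : 0 < ∑ t, B i t :=
  Finset.sum_pos (fun t _ => hB i t) Finset.univ_nonempty

lemma rowFactor_pos (ha : ∀ i, 0 < a i) (hB : ∀ i j, 0 < B i j) (i : ι) : 0 < rowFactor a B i :=
  div_pos (ha i) (rowSum_pos hB i)

lemma rowSum_mul_rowFactor (hB : ∀ i j, 0 < B i j) (i : ι) :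
    (∑ t, B i t) * rowFactor a B i = a i :=
  mul_div_cancel₀ _ (rowSum_pos hB i).ne'

lemma rowSum_fitRows (hB : ∀ i j, 0 < B i j) (i : ι) : ∑ j, fitRows a B i j = a i := by
  simp only [fitRows_apply, ← Finset.sum_mul, rowSum_mul_rowFactor hB]

lemma biproportional_fitRows (ha : ∀ i, 0 < a i) (hB : ∀ i j, 0 < B i j) :
    Biproportional B (fitRows a B) :=
  ⟨rowFactor a B, 1, rowFactor_pos ha hB, fun _ => one_pos,
    fun i j => by simp only [fitRows_apply, Pi.one_apply]; ring⟩

lemma fitRows_pos (ha : ∀ i, 0 < a i) (hB : ∀ i j, 0 < B i j) (i : ι) (j : κ) :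
    0 < fitRows a B i j :=
  (biproportional_fitRows ha hB).pos hB i j

end Rows

variable [Fintype ι] {l u δ : ℝ}

lemma biproportional_rasStep [Nonempty ι] [Nonempty κ] (ha : ∀ i, 0 < a i) (hp : ∀ j, 0 < p j)
    (hB : ∀ i j, 0 < B i j) : Biproportional B (rasStep a p B) :=
  (biproportional_fitRows ha hB).trans
    (biproportional_fitRows (B := (fitRows a B)ᵀ) hp fun j i => fitRows_pos ha hB i j).transpose

lemma colSum_rasStep [Nonempty ι] [Nonempty κ] (ha : ∀ i, 0 < a i) (hB : ∀ i j, 0 < B i j)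
    (j : κ) : ∑ i, rasStep a p B i j = p j :=
  rowSum_fitRows (B := (fitRows a B)ᵀ) (fun j i => fitRows_pos ha hB i j) j

lemma inv_colFactor_fitRows (a : ι → ℝ) (p : κ → ℝ) (B : Matrix ι κ ℝ) (j : κ) :
    (rowFactor p (fitRows a B)ᵀ j)⁻¹ = ∑ i, B i j / p j * rowFactor a B i := by
  simp only [rowFactor, inv_div, Matrix.transpose_apply, fitRows_apply, Finset.sum_div,
    div_mul_eq_mul_div]

lemma inv_colFactor_mem_Icc (hB : ∀ i j, 0 < B i j) (hp : ∀ j, 0 < p j)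
    (hcol : ∀ j, ∑ i, B i j = p j) (hr : ∀ i, rowFactor a B i ∈ Icc l u) (j : κ) :
    (rowFactor p (fitRows a B)ᵀ j)⁻¹ ∈ Icc l u :=
  inv_colFactor_fitRows a p B j ▸ sum_mul_mem_Icc (fun i => (div_pos (hB i j) (hp j)).le)
    (sum_div_eq_one (hp j).ne' (hcol j)) hr

lemma inv_colFactor_mem_Icc_of_mul_le (hB : ∀ i j, 0 < B i j) (hp : ∀ j, 0 < p j)
    (hcol : ∀ j, ∑ i, B i j = p j) (hr : ∀ i, rowFactor a B i ∈ Icc l u) {s : ι} {j : κ}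
    (hδ : δ * p j ≤ B s j) :
    (rowFactor p (fitRows a B)ᵀ j)⁻¹ ∈
      Icc (l + δ * (rowFactor a B s - l)) (u - δ * (u - rowFactor a B s)) :=
  inv_colFactor_fitRows a p B j ▸ sum_mul_mem_Icc_of_le_weight
    (fun i => (div_pos (hB i j) (hp j)).le) (sum_div_eq_one (hp j).ne' (hcol j)) hr
    ((le_div_iff₀ (hp j)).2 hδ)

lemma rowFactor_rasStep_mem_Icc [Nonempty κ] (ha : ∀ i, 0 < a i) (hB : ∀ i j, 0 < B i j)
    (hl : 0 < l) (hc : ∀ j, (rowFactor p (fitRows a B)ᵀ j)⁻¹ ∈ Icc l u) (i : ι) :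
    rowFactor a (rasStep a p B) i ∈ Icc l u := by
  have hc' : ∀ j, rowFactor p (fitRows a B)ᵀ j ∈ Icc u⁻¹ l⁻¹ := fun j => by
    simpa only [inv_inv] using inv_mem_Icc_inv hl (hc j)
  have hu : 0 < u := by
    obtain ⟨j⟩ := ‹Nonempty κ›
    exact hl.trans_le ((hc j).1.trans (hc j).2)
  have hr : (rowFactor a (rasStep a p B) i)⁻¹ ∈ Icc u⁻¹ l⁻¹ :=
    inv_colFactor_mem_Icc (B := (fitRows a B)ᵀ) (fun j i => fitRows_pos ha hB i j) ha
      (rowSum_fitRows hB) hc' i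
  simpa only [inv_inv] using inv_mem_Icc_inv (inv_pos.2 hu) hr

lemma abs_rasStep_sub_le (hB : ∀ i j, 0 < B i j) (hp : ∀ j, 0 < p j)
    (hcol : ∀ j, ∑ i, B i j = p j) (hl : 0 < l) (hr : ∀ i, rowFactor a B i ∈ Icc l u)
    (i : ι) (j : κ) : |rasStep a p B i j - B i j| ≤ p j * ((u - l) / l) := by
  set d := (rowFactor p (fitRows a B)ᵀ j)⁻¹ with hd_def
  have hd : d ∈ Icc l u := inv_colFactor_mem_Icc hB hp hcol hr j
  have hd0 : 0 < d := hl.trans_le hd.1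
  have hstep : rasStep a p B i j = B i j * rowFactor a B i / d := by
    rw [hd_def, div_inv_eq_mul]
    rfl
  have hBp : B i j ≤ p j := hcol j ▸ le_colSum hB i j
  have hdist : |rowFactor a B i - d| ≤ u - l := Real.dist_le_of_mem_Icc (hr i) hd
  calc |rasStep a p B i j - B i j| = |B i j * ((rowFactor a B i - d) / d)| := by
        rw [hstep]
        field_simp
    _ = B i j * (|rowFactor a B i - d| / d) := by
        rw [abs_mul, abs_div, abs_of_pos (hB i j), abs_of_pos hd0]
    _ ≤ p j * ((u - l) / l) := by
        have := hp j
        have := (abs_nonneg _).trans hdist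
        gcongr
        exact hd.1

lemma one_mem_Icc_of_rowFactor_mem_Icc [Nonempty ι] [Nonempty κ] (ha : ∀ i, 0 < a i)
    (hB : ∀ i j, 0 < B i j) (hsum : ∑ i, ∑ j, B i j = ∑ i, a i)
    (hr : ∀ i, rowFactor a B i ∈ Icc l u) : (1 : ℝ) ∈ Icc l u := by
  have hS : 0 < ∑ i, a i := Finset.sum_pos (fun i _ => ha i) Finset.univ_nonempty
  have haverage : ∑ i, (∑ j, B i j) / (∑ i, a i) * rowFactor a B i = 1 := by
    simp only [div_mul_eq_mul_div, rowSum_mul_rowFactor hB, sum_div_eq_one hS.ne' rfl]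
  exact haverage ▸ sum_mul_mem_Icc (fun i => (div_pos (rowSum_pos hB i) hS).le)
    (sum_div_eq_one hS.ne' hsum) hr

lemma exists_pos_mul_colSum_le [Nonempty ι] [Nonempty κ] {M : Matrix ι κ ℝ}
    (hM : ∀ i j, 0 < M i j) (ha : ∀ i, 0 < a i) (hp : ∀ j, 0 < p j) (hu : 0 < u) :
    ∃ δ > 0, ∀ B, Biproportional M B → (∀ j, ∑ i, B i j = p j) → (∀ i, rowFactor a B i ≤ u) →
      ∀ i j, δ * p j ≤ B i j := by
  obtain ⟨c, hc, hcM⟩ := exists_pos_mul_rowSum_mul_colSum_le hM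
  obtain ⟨i₀, hi₀⟩ := Finite.exists_min a
  have hS : 0 < ∑ j, p j := Finset.sum_pos (fun j _ => hp j) Finset.univ_nonempty
  refine ⟨c * (a i₀ / u) / ∑ j, p j, div_pos (mul_pos hc (div_pos (ha i₀) hu)) hS,
    fun B hMB hcol hr i j => ?_⟩
  have hrow : a i₀ / u ≤ ∑ t, B i t := by
    rw [div_le_iff₀ hu, mul_comm]
    exact (hi₀ i).trans ((div_le_iff₀ (rowSum_pos (hMB.pos hM) i)).1 (hr i))
  have hcross := hcM B hMB i j
  simp only [hcol] at hcross
  rw [div_mul_eq_mul_div, div_le_iff₀ hS]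
  calc c * (a i₀ / u) * p j = c * (a i₀ / u * p j) := mul_assoc _ _ _
    _ ≤ c * ((∑ t, B i t) * p j) := by have := hp j; gcongr
    _ ≤ B i j * ∑ j, p j := hcross

end Steps

section Iteration

variable [Fintype ι] [Fintype κ] [Nonempty ι] [Nonempty κ] {a : ι → ℝ} {p : κ → ℝ}
  {B : Matrix ι κ ℝ} {l u δ : ℝ} (ha : ∀ i, 0 < a i) (hp : ∀ j, 0 < p j)
  (hB : ∀ i j, 0 < B i j)

include ha hp hB

lemma biproportional_iterate_rasStep (k : ℕ) : Biproportional B ((rasStep a p)^[k] B) := by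
  induction k with
  | zero => exact .refl B
  | succ k ih =>
    rw [Function.iterate_succ_apply']
    exact ih.trans (biproportional_rasStep ha hp (ih.pos hB))

lemma iterate_rasStep_pos (k : ℕ) (i : ι) (j : κ) : 0 < (rasStep a p)^[k] B i j :=
  (biproportional_iterate_rasStep ha hp hB k).pos hB i j

variable (hcol : ∀ j, ∑ i, B i j = p j)

include hcol

lemma colSum_iterate_rasStep (k : ℕ) (j : κ) : ∑ i, (rasStep a p)^[k] B i j = p j := by
  cases k with
  | zero => exact hcol j
  | succ k =>
    rw [Function.iterate_succ_apply']
    exact colSum_rasStep ha (iterate_rasStep_pos ha hp hB k) j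

section Interval

variable (hl : 0 < l) (hr : ∀ i, rowFactor a B i ∈ Icc l u)

include hl hr

lemma rowFactor_iterate_rasStep_mem_Icc (k : ℕ) (i : ι) :
    rowFactor a ((rasStep a p)^[k] B) i ∈ Icc l u := by
  induction k generalizing i with
  | zero => exact hr i
  | succ k ih =>
    have hBk := iterate_rasStep_pos ha hp hB k
    rw [Function.iterate_succ_apply']
    exact rowFactor_rasStep_mem_Icc ha hBk hl
      (inv_colFactor_mem_Icc hBk hp (colSum_iterate_rasStep ha hp hB hcol k) ih) i

lemma exists_pos_mul_colSum_le_iterate_rasStep :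
    ∃ δ > 0, ∀ k i j, δ * p j ≤ (rasStep a p)^[k] B i j := by
  have hu : 0 < u := by
    obtain ⟨i⟩ := ‹Nonempty ι›
    exact hl.trans_le ((hr i).1.trans (hr i).2)
  obtain ⟨δ, hδ, hδB⟩ := exists_pos_mul_colSum_le hB ha hp hu
  exact ⟨δ, hδ, fun k => hδB _ (biproportional_iterate_rasStep ha hp hB k)
    (colSum_iterate_rasStep ha hp hB hcol k)
    fun i => (rowFactor_iterate_rasStep_mem_Icc ha hp hB hcol hl hr k i).2⟩

variable (hδ : 0 < δ) (hδB : ∀ k i j, δ * p j ≤ (rasStep a p)^[k] B i j)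

include hδ hδB

lemma exists_Icc_rowFactor_iterate_rasStep (k : ℕ) :
    ∃ l' u', l ≤ l' ∧ u' - l' = (u - l) * (1 - δ) ^ k ∧
      ∀ i, rowFactor a ((rasStep a p)^[k] B) i ∈ Icc l' u' := by
  induction k with
  | zero => exact ⟨l, u, le_rfl, by simp, hr⟩
  | succ k ih =>
    obtain ⟨l', u', hll', hlen, hr'⟩ := ih
    obtain ⟨s⟩ := ‹Nonempty ι›
    have hBk := iterate_rasStep_pos ha hp hB k
    set r := rowFactor a ((rasStep a p)^[k] B) s
    have hl' : l ≤ l' + δ * (r - l') := by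
      have := mul_nonneg hδ.le (sub_nonneg.2 (hr' s).1)
      linarith
    refine ⟨l' + δ * (r - l'), u' - δ * (u' - r), hl', ?_, ?_⟩
    · rw [pow_succ, ← mul_assoc, ← hlen]
      ring
    · rw [Function.iterate_succ_apply']
      exact rowFactor_rasStep_mem_Icc ha hBk (hl.trans_le hl') fun j =>
        inv_colFactor_mem_Icc_of_mul_le hBk hp (colSum_iterate_rasStep ha hp hB hcol k) hr'
          (hδB k s j)

lemma cauchySeq_iterate_rasStep (i : ι) (j : κ) :
    CauchySeq fun k => (rasStep a p)^[k] B i j := by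
  refine cauchySeq_of_le_geometric (1 - δ) (p j * ((u - l) / l)) (by linarith) fun k => ?_
  obtain ⟨l', u', hll', hlen, hr'⟩ :=
    exists_Icc_rowFactor_iterate_rasStep ha hp hB hcol hl hr hδ hδB k
  have hlu' : 0 ≤ u' - l' := sub_nonneg.2 ((hr' i).1.trans (hr' i).2)
  rw [dist_comm, Real.dist_eq, Function.iterate_succ_apply']
  calc _ ≤ p j * ((u' - l') / l') := abs_rasStep_sub_le (iterate_rasStep_pos ha hp hB k) hp
        (colSum_iterate_rasStep ha hp hB hcol k) (hl.trans_le hll') hr' i j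
    _ ≤ p j * ((u' - l') / l) := by have := hp j; gcongr
    _ = p j * ((u - l) / l) * (1 - δ) ^ k := by rw [hlen]; ring

lemma tendsto_rowFactor_iterate_rasStep (hsum : ∑ i, a i = ∑ j, p j) (i : ι) :
    Tendsto (fun k => rowFactor a ((rasStep a p)^[k] B) i) atTop (𝓝 1) := by
  have hδ1 : δ ≤ 1 := by
    obtain ⟨j⟩ := ‹Nonempty κ›
    have hBp : B i j ≤ p j := hcol j ▸ le_colSum hB i j
    exact le_of_mul_le_mul_right (by simpa using (hδB 0 i j).trans hBp) (hp j)
  have hgeom : Tendsto (fun k : ℕ => (u - l) * (1 - δ) ^ k) atTop (𝓝 0) := by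
    simpa using (tendsto_pow_atTop_nhds_zero_of_lt_one (sub_nonneg.2 hδ1)
      (sub_lt_self 1 hδ)).const_mul (u - l)
  refine tendsto_iff_dist_tendsto_zero.2 (squeeze_zero (fun _ => dist_nonneg) (fun k => ?_) hgeom)
  obtain ⟨l', u', -, hlen, hr'⟩ :=
    exists_Icc_rowFactor_iterate_rasStep ha hp hB hcol hl hr hδ hδB k
  have htotal : ∑ i, ∑ j, (rasStep a p)^[k] B i j = ∑ i, a i := by
    rw [hsum]
    exact Finset.sum_comm.trans
      (Finset.sum_congr rfl fun j _ => colSum_iterate_rasStep ha hp hB hcol k j)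
  exact hlen ▸ Real.dist_le_of_mem_Icc (hr' i)
    (one_mem_Icc_of_rowFactor_mem_Icc ha (iterate_rasStep_pos ha hp hB k) htotal hr')

end Interval

theorem exists_tendsto_iterate_rasStep (hsum : ∑ i, a i = ∑ j, p j) :
    ∃ A : Matrix ι κ ℝ, (∀ i j, Tendsto (fun k => (rasStep a p)^[k] B i j) atTop (𝓝 (A i j))) ∧
      (∀ i j, Tendsto (fun k => fitRows a ((rasStep a p)^[k] B) i j) atTop (𝓝 (A i j))) ∧
      ∀ i j, 0 < A i j := by
  obtain ⟨i₀, hi₀⟩ := Finite.exists_min (rowFactor a B)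
  obtain ⟨i₁, hi₁⟩ := Finite.exists_max (rowFactor a B)
  have hl : 0 < rowFactor a B i₀ := rowFactor_pos ha hB i₀
  have hr : ∀ i, rowFactor a B i ∈ Icc (rowFactor a B i₀) (rowFactor a B i₁) :=
    fun i => ⟨hi₀ i, hi₁ i⟩
  obtain ⟨δ, hδ, hδB⟩ := exists_pos_mul_colSum_le_iterate_rasStep ha hp hB hcol hl hr
  choose A hA using fun i j =>
    cauchySeq_tendsto_of_complete (cauchySeq_iterate_rasStep ha hp hB hcol hl hr hδ hδB i j)
  refine ⟨A, hA, fun i j => ?_, fun i j => ?_⟩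
  · simpa only [fitRows_apply, mul_one] using (hA i j).mul
      (tendsto_rowFactor_iterate_rasStep ha hp hB hcol hl hr hδ hδB hsum i)
  · exact (mul_pos hδ (hp j)).trans_le (ge_of_tendsto' (hA i j) fun k => hδB k i j)

end Iteration

theorem ras_iteration_converges_general [Fintype ι] [Fintype κ] {M : Matrix ι κ ℝ}
    (hM : ∀ i j, 0 < M i j) {a : ι → ℝ} {p : κ → ℝ} (ha : ∀ i, 0 < a i) (hp : ∀ j, 0 < p j)
    (hsum : ∑ i, a i = ∑ j, p j) {P Q : ℕ → Matrix ι κ ℝ} (hP1 : Biproportional M (P 1))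
    (hQ : ∀ k, 1 ≤ k → Q k = fitRows a (P k))
    (hP : ∀ k, 1 ≤ k → P (k + 1) = fitCols p (Q k)) :
    ∃ A : Matrix ι κ ℝ, (∀ i j, Tendsto (fun k => P k i j) atTop (𝓝 (A i j))) ∧
      (∀ i j, Tendsto (fun k => Q k i j) atTop (𝓝 (A i j))) ∧ (∀ i j, 0 < A i j) ∧
      (∀ i, ∑ j, A i j = a i) ∧ (∀ j, ∑ i, A i j = p j) ∧ Biproportional M A := by
  rcases isEmpty_or_nonempty ι with _ | _
  · have : IsEmpty κ := not_nonempty_iff.1 fun _ =>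
      (nonempty_of_sum_eq_sum hp hsum.symm).elim isEmptyElim
    exact ⟨P 1, isEmptyElim, isEmptyElim, isEmptyElim, isEmptyElim, isEmptyElim, hP1⟩
  have : Nonempty κ := nonempty_of_sum_eq_sum ha hsum
  have hP1_pos := hP1.pos hM
  have hstep : ∀ k, 1 ≤ k → P (k + 1) = rasStep a p (P k) := fun k hk => by
    rw [hP k hk, hQ k hk, rasStep]
  have hbip : Biproportional M (P 2) :=
    hstep 1 le_rfl ▸ hP1.trans (biproportional_rasStep ha hp hP1_pos)
  have hcol : ∀ j, ∑ i, P 2 i j = p j := hstep 1 le_rfl ▸ colSum_rasStep ha hP1_pos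
  have hP2 := hbip.pos hM
  have hPk := eq_iterate_of_succ_eq fun k (hk : 2 ≤ k) => hstep k (one_le_two.trans hk)
  have hQk : ∀ k, Q (k + 2) = fitRows a ((rasStep a p)^[k] (P 2)) := fun k =>
    hPk k ▸ hQ (k + 2) (by omega)
  obtain ⟨A, hPA, hQA, hA⟩ := exists_tendsto_iterate_rasStep ha hp hP2 hcol hsum
  refine ⟨A, fun i j => (tendsto_add_atTop_iff_nat 2).1 ((hPA i j).congr fun k => by rw [hPk k]),
    fun i j => (tendsto_add_atTop_iff_nat 2).1 ((hQA i j).congr fun k => by rw [hQk k]), hA,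
    fun i => sum_eq_of_tendsto (hQA i) (.of_forall fun k => ?_),
    fun j => sum_eq_of_tendsto (fun i => hPA i j) (.of_forall fun k => ?_),
    .of_tendsto hM hA (.of_forall fun k => ?_) hPA⟩
  · exact rowSum_fitRows (iterate_rasStep_pos ha hp hP2 k) i
  · exact colSum_iterate_rasStep ha hp hP2 hcol k j
  · exact hbip.trans (biproportional_iterate_rasStep ha hp hP2 k)

/-- Convergence of the market-invariant (RAS) iteration: when `M` is entrywise
positive and the positive marginals `a`, `p` have equal total sums, both iterate
sequences converge entrywise to a common limit `A$`, which is entrywise positive,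
has row sums `a` and column sums `p`, and is biproportional to `M` with positive
scaling vectors. -/
theorem ras_iteration_converges
    (m n : ℕ) (M : Fin m → Fin n → ℝ) (hM : ∀ i j, 0 < M i j)
    (a : Fin m → ℝ) (p : Fin n → ℝ) (ha : ∀ i, 0 < a i) (hp : ∀ j, 0 < p j)
    (hsum : ∑ i, a i = ∑ j, p j)
    (Mp Ma : ℕ → Fin m → Fin n → ℝ)
    (hMp1 : ∀ i j, Mp 1 i j = M i j * p j)
    (hMa : ∀ k, 1 ≤ k → ∀ i j, Ma k i j = Mp k i j * a i / ∑ t, Mp k i t)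
    (hMp : ∀ k, 1 ≤ k → ∀ i j, Mp (k + 1) i j = Ma k i j * p j / ∑ s, Ma k s j) :
    ∃ A : Fin m → Fin n → ℝ,
      (∀ i j, Filter.Tendsto (fun k => Mp k i j) Filter.atTop (nhds (A i j))) ∧
      (∀ i j, Filter.Tendsto (fun k => Ma k i j) Filter.atTop (nhds (A i j))) ∧
      (∀ i j, 0 < A i j) ∧
      (∀ i, ∑ j, A i j = a i) ∧
      (∀ j, ∑ i, A i j = p j) ∧
      (∃ x' : Fin m → ℝ, ∃ p' : Fin n → ℝ,
        (∀ i, 0 < x' i) ∧ (∀ j, 0 < p' j) ∧ ∀ i j, A i j = x' i * M i j * p' j) :=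
  ras_iteration_converges_general hM ha hp hsum
    ⟨fun _ => 1, p, fun _ => one_pos, hp, fun i j => by rw [hMp1, one_mul]⟩
    (fun k hk => by ext i j; exact (hMa k hk i j).trans (mul_div_assoc _ _ _))
    (fun k hk => by ext i j; exact (hMp k hk i j).trans (mul_div_assoc _ _ _))
end

section
/- Let M be an m×n real matrix with nonnegative entries whose columns each sum to 1, let p ∈ ℝ^n have all entries positive, fix a banker index j_b ∈ {1,…,n}, and let R : {1,…,m} × {1,…,T} → ℝ satisfy R(i,t) > 0 for all i, t and ∏_{t=1}^T R(i,t) = 1 for each i (tethered gross returns). Under the banker rebalancing process each non-banker portfolio j ≠ j_b is held at its target weights every period, so its final value is p_j · ∏_{t=1}^T ( ∑_{i=1}^m M_{ij} · R(i,t) ), while internal rebalancing preserves total wealth, so the banker's final value is p_{j_b}^T := ∑_{j=1}^n p_j − ∑_{j ≠ j_b} p_j · ∏_{t=1}^T ( ∑_{i=1}^m M_{ij} · R(i,t) ). Then p_{j_b}^T ≤ p_{j_b}, and the inequality is strict (the banker portfolio loses value) whenever there exist a period t, indices i₁, i₂, and a column j ≠ j_b with M_{i₁ j} > 0, M_{i₂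 j} > 0 and R(i₁,t) ≠ R(i₂,t). -/
/-!
By weighted AM-GM, a portfolio held at fixed weights grows in each period by at least the weighted
geometric mean of the asset returns. Geometric means are multiplicative, so over all periods it
grows by at least the weighted geometric mean of the cumulative returns, which is `1` when the
returns are tethered. Every non-banker therefore gains, and the banker pays for these gains.
-/

section WeightedMeans

variable {ι τ : Type*} {s : Finset ι} {u : Finset τ} {w : ι → ℝ} {z : ι → τ → ℝ}

theorem prod_prod_rpow_comm (hz : ∀ i ∈ s, ∀ t ∈ u, 0 ≤ z i t) :
    ∏ i ∈ s, (∏ t ∈ u, z i t) ^ w i = ∏ t ∈ u, ∏ i ∈ s, z i t ^ w i := by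
  rw [Finset.prod_comm]
  exact Finset.prod_congr rfl fun i hi ↦ (Real.finsetProd_rpow u (z i) (hz i hi) (w i)).symm

theorem prod_prod_rpow_le_prod_sum_mul (hw : ∀ i ∈ s, 0 ≤ w i) (hw₁ : ∑ i ∈ s, w i = 1)
    (hz : ∀ i ∈ s, ∀ t ∈ u, 0 ≤ z i t) :
    ∏ i ∈ s, (∏ t ∈ u, z i t) ^ w i ≤ ∏ t ∈ u, ∑ i ∈ s, w i * z i t := by
  rw [prod_prod_rpow_comm hz]
  exact Finset.prod_le_prod
    (fun t ht ↦ Finset.prod_nonneg fun i hi ↦ Real.rpow_nonneg (hz i hi t ht) _)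
    fun t ht ↦ Real.geom_mean_le_arith_mean_weighted s w _ hw hw₁ fun i hi ↦ hz i hi t ht

theorem prod_prod_rpow_lt_prod_sum_mul (hw : ∀ i ∈ s, 0 ≤ w i) (hw₁ : ∑ i ∈ s, w i = 1)
    (hz : ∀ i ∈ s, ∀ t ∈ u, 0 < z i t)
    (hne : ∃ t ∈ u, ∃ i ∈ s, ∃ k ∈ s, w i ≠ 0 ∧ w k ≠ 0 ∧ z i t ≠ z k t) :
    ∏ i ∈ s, (∏ t ∈ u, z i t) ^ w i < ∏ t ∈ u, ∑ i ∈ s, w i * z i t := by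
  have hz₀ : ∀ t ∈ u, ∀ i ∈ s, 0 ≤ z i t := fun t ht i hi ↦ (hz i hi t ht).le
  obtain ⟨t, ht, hne⟩ := hne
  rw [prod_prod_rpow_comm fun i hi t ht ↦ hz₀ t ht i hi]
  exact Finset.prod_lt_prod
    (fun t ht ↦ Finset.prod_pos fun i hi ↦ Real.rpow_pos_of_pos (hz i hi t ht) _)
    (fun t ht ↦ Real.geom_mean_le_arith_mean_weighted s w _ hw hw₁ (hz₀ t ht))
    ⟨t, ht, (Real.geom_mean_lt_arith_mean_weighted_iff_of_nonneg s w _ hw hw₁ (hz₀ t ht)).2 hne⟩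

theorem one_le_prod_rpow {x : ι → ℝ} (hw : ∀ i ∈ s, 0 ≤ w i) (hx : ∀ i ∈ s, 1 ≤ x i) :
    1 ≤ ∏ i ∈ s, x i ^ w i :=
  Finset.one_le_prod fun i hi ↦ Real.one_le_rpow (hx i hi) (hw i hi)

theorem one_le_prod_sum_mul (hw : ∀ i ∈ s, 0 ≤ w i) (hw₁ : ∑ i ∈ s, w i = 1)
    (hz : ∀ i ∈ s, ∀ t ∈ u, 0 ≤ z i t) (hprod : ∀ i ∈ s, 1 ≤ ∏ t ∈ u, z i t) :
    1 ≤ ∏ t ∈ u, ∑ i ∈ s, w i * z i t :=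
  (one_le_prod_rpow hw hprod).trans (prod_prod_rpow_le_prod_sum_mul hw hw₁ hz)

theorem one_lt_prod_sum_mul (hw : ∀ i ∈ s, 0 ≤ w i) (hw₁ : ∑ i ∈ s, w i = 1)
    (hz : ∀ i ∈ s, ∀ t ∈ u, 0 < z i t) (hprod : ∀ i ∈ s, 1 ≤ ∏ t ∈ u, z i t)
    (hne : ∃ t ∈ u, ∃ i ∈ s, ∃ k ∈ s, w i ≠ 0 ∧ w k ≠ 0 ∧ z i t ≠ z k t) :
    1 < ∏ t ∈ u, ∑ i ∈ s, w i * z i t :=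
  (one_le_prod_rpow hw hprod).trans_lt (prod_prod_rpow_lt_prod_sum_mul hw hw₁ hz hne)

end WeightedMeans

theorem sum_sub_sum_erase_mul {β A : Type*} [DecidableEq β] [Ring A] {s : Finset β} {b : β}
    (hb : b ∈ s) (p g : β → A) :
    ∑ j ∈ s, p j - ∑ j ∈ s.erase b, p j * g j = p b - ∑ j ∈ s.erase b, p j * (g j - 1) := by
  simp only [mul_sub, mul_one, Finset.sum_sub_distrib, ← Finset.add_sum_erase s p hb]
  abel

theorem banker_disadvantaged_tethered_general {ι β τ : Type*} [Fintype ι] [Fintype β]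
    [DecidableEq β] [Fintype τ] (M : ι → β → ℝ) (p : β → ℝ) (b : β) (R : ι → τ → ℝ)
    (hM : ∀ j ≠ b, ∀ i, 0 ≤ M i j) (hMcol : ∀ j ≠ b, ∑ i, M i j = 1) (hp : ∀ j ≠ b, 0 < p j)
    (hR : ∀ i t, 0 < R i t) (hprod : ∀ i, 1 ≤ ∏ t, R i t) :
    ∑ j, p j - ∑ j ∈ Finset.univ.erase b, p j * ∏ t, ∑ i, M i j * R i t ≤ p b ∧
    ((∃ t i₁ i₂ j, j ≠ b ∧ 0 < M i₁ j ∧ 0 < M i₂ j ∧ R i₁ t ≠ R i₂ t) →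
      ∑ j, p j - ∑ j ∈ Finset.univ.erase b, p j * ∏ t, ∑ i, M i j * R i t < p b) := by
  rw [sum_sub_sum_erase_mul (Finset.mem_univ b)]
  have gain_nonneg : ∀ j ∈ Finset.univ.erase b, 0 ≤ p j * (∏ t, ∑ i, M i j * R i t - 1) := by
    intro j hj
    have hjb := Finset.ne_of_mem_erase hj
    exact mul_nonneg (hp j hjb).le <| sub_nonneg.2 <|
      one_le_prod_sum_mul (fun i _ ↦ hM j hjb i) (hMcol j hjb) (fun i _ t _ ↦ (hR i t).le)
        fun i _ ↦ hprod i
  refine ⟨sub_le_self _ (Finset.sum_nonneg gain_nonneg), ?_⟩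
  rintro ⟨t, i₁, i₂, j, hjb, h₁, h₂, hne⟩
  have growth_gt_one : 1 < ∏ t, ∑ i, M i j * R i t :=
    one_lt_prod_sum_mul (fun i _ ↦ hM j hjb i) (hMcol j hjb) (fun i _ t _ ↦ hR i t)
      (fun i _ ↦ hprod i)
      ⟨t, Finset.mem_univ t, i₁, Finset.mem_univ i₁, i₂, Finset.mem_univ i₂, h₁.ne', h₂.ne', hne⟩
  exact sub_lt_self _ <| Finset.sum_pos' gain_nonneg
    ⟨j, Finset.mem_erase.2 ⟨hjb, Finset.mem_univ j⟩,
      mul_pos (hp j hjb) (sub_pos.2 growth_gt_one)⟩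

/-- The banker rebalancing process disadvantages the banker under tethered returns:
each non-banker portfolio `j` ends at `p_j · ∏_t ∑_i M_{ij} R(i,t)` and the banker
receives the remaining wealth `p_{j_b}^T = ∑_j p_j − ∑_{j ≠ j_b} p_j ∏_t ∑_i M_{ij} R(i,t)`,
which satisfies `p_{j_b}^T ≤ p_{j_b}`, with strict inequality whenever some non-banker
column has two supported asset classes with different returns in some period. -/
theorem banker_disadvantaged_tethered
    (m n T : ℕ) (M : Fin m → Fin n → ℝ)
    (hM : ∀ i j, 0 ≤ M i j) (hMcol : ∀ j, ∑ i, M i j = 1)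
    (p : Fin n → ℝ) (hp : ∀ j, 0 < p j)
    (jb : Fin n)
    (R : Fin m → Fin T → ℝ)
    (hR : ∀ i t, 0 < R i t)
    (hteth : ∀ i, ∏ t, R i t = 1)
    (pT : ℝ)
    (hpT : pT = (∑ j, p j) -
        ∑ j ∈ Finset.univ.erase jb, p j * ∏ t, ∑ i, M i j * R i t) :
    pT ≤ p jb ∧
    ((∃ t : Fin T, ∃ i₁ i₂ : Fin m, ∃ j : Fin n,
        j ≠ jb ∧ 0 < M i₁ j ∧ 0 < M i₂ j ∧ R i₁ t ≠ R i₂ t) →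
      pT < p jb) := by
  subst hpT
  exact banker_disadvantaged_tethered_general M p jb R (fun j _ i ↦ hM i j) (fun j _ ↦ hMcol j)
    (fun j _ ↦ hp j) hR fun i ↦ (hteth i).ge
end

section
/- Let M be an m×n real matrix with all entries positive, let a ∈ ℝ^m and p ∈ ℝ^n have all entries positive with ∑_{i=1}^m a_i = ∑_{j=1}^n p_j, and let A^$_{ij} = x'_i M_{ij} p'_j (with x' ∈ ℝ^m, p' ∈ ℝ^n positive) satisfy ∑_{j=1}^n A^$_{ij} = a_i for all i and ∑_{i=1}^m A^$_{ij} = p_j for all j. Let x ∈ ℝ^m have all entries positive (a proportional market movement of the asset classes), and define the moved totals a_{x,i} = x_i a_i and p_{x,j} = ∑_{i=1}^m x_i A^$_{ij}. Then ∑_{i=1}^m a_{x,i} = ∑_{j=1}^n p_{x,j}, and the matrix A^$_x with entries (A^$_x)_{ij} = x_i A^$_{ij} is biproportional to M (indeed (A^$_x)_{ij} = (x_i x'_i) M_{ij} p'_j), has all entries positive, row sums a_x and column sums p_x; consequently A^$_x is the unique nonnegative biproportional solution of the rebalancing problem (M, a_x, p_x), so the market-invariant rebalancing process satisfies the market-invariance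 property: after a market movement x it reallocates nothing between portfolios. -/
/-!
A market movement only rescales rows, so it preserves biproportionality; what needs an argument is
uniqueness. Two solutions of one rebalancing problem differ by a diagonal scaling
`B i j = r i * A i j * s j`, and `D = B - A` has vanishing row and column sums, so it is orthogonal
to every matrix of the form `f i - g j`. Taking `f = r` and `g = s⁻¹` gives
`∑ i, ∑ j, A i j * (r i * s j - 1) ^ 2 * (s j)⁻¹ = 0`, a sum of nonnegative terms; hence
`r i * s j = 1` wherever `A i j ≠ 0`, and `B = A`.
-/

variable {ι κ K : Type*}

theorem sum_sum_mul_sub_eq_zero [Fintype ι] [Fintype κ] [NonUnitalNonAssocRing K]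
    {D : ι → κ → K} (hrow : ∀ i, ∑ j, D i j = 0) (hcol : ∀ j, ∑ i, D i j = 0)
    (f : ι → K) (g : κ → K) :
    ∑ i, ∑ j, D i j * (f i - g j) = 0 := by
  have hf : ∑ i, ∑ j, D i j * f i = 0 := by
    simp only [← Finset.sum_mul, hrow, zero_mul, Finset.sum_const_zero]
  have hg : ∑ i, ∑ j, D i j * g j = 0 := by
    rw [Finset.sum_comm]
    simp only [← Finset.sum_mul, hcol, zero_mul, Finset.sum_const_zero]
  simp only [mul_sub, Finset.sum_sub_distrib, hf, hg, sub_zero]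

theorem eq_zero_of_sum_sum_eq_zero [Fintype ι] [Fintype κ] [AddCommMonoid K] [PartialOrder K]
    [IsOrderedAddMonoid K] {T : ι → κ → K} (hT : ∀ i j, 0 ≤ T i j)
    (hsum : ∑ i, ∑ j, T i j = 0) (i : ι) (j : κ) : T i j = 0 := by
  have hrow : ∑ j, T i j = 0 :=
    congrFun ((Fintype.sum_eq_zero_iff_of_nonneg fun i ↦
      Finset.sum_nonneg fun j _ ↦ hT i j).1 hsum) i
  exact congrFun ((Fintype.sum_eq_zero_iff_of_nonneg (hT i)).1 hrow) j

section Field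

variable [Field K] [LinearOrder K] [IsStrictOrderedRing K]

theorem eq_of_scaling_of_sum_eq [Fintype ι] [Fintype κ] {A B : ι → κ → K} {r : ι → K} {s : κ → K}
    (hA : ∀ i j, 0 ≤ A i j) (hs : ∀ j, 0 < s j) (hB : ∀ i j, B i j = r i * A i j * s j)
    (hrow : ∀ i, ∑ j, B i j = ∑ j, A i j) (hcol : ∀ j, ∑ i, B i j = ∑ i, A i j) :
    B = A := by
  have hterm (i j) :
      (B i j - A i j) * (r i - (s j)⁻¹) = A i j * (r i * s j - 1) ^ 2 * (s j)⁻¹ := by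
    have hs_ne : s j ≠ 0 := (hs j).ne'
    rw [hB]
    field_simp
  have hnonneg (i j) : 0 ≤ A i j * (r i * s j - 1) ^ 2 * (s j)⁻¹ :=
    mul_nonneg (mul_nonneg (hA i j) (sq_nonneg _)) (inv_nonneg.2 (hs j).le)
  have hsum : ∑ i, ∑ j, A i j * (r i * s j - 1) ^ 2 * (s j)⁻¹ = 0 := by
    simp only [← hterm]
    exact sum_sum_mul_sub_eq_zero (D := fun i j ↦ B i j - A i j)
      (fun i ↦ by rw [Finset.sum_sub_distrib, hrow, sub_self])
      (fun j ↦ by rw [Finset.sum_sub_distrib, hcol, sub_self]) r fun j ↦ (s j)⁻¹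
  funext i j
  have hzero : A i j * (r i * s j - 1) ^ 2 * (s j)⁻¹ = 0 :=
    eq_zero_of_sum_sum_eq_zero hnonneg hsum i j
  have hcases : A i j = 0 ∨ r i * s j - 1 = 0 := by
    simpa only [mul_eq_zero, pow_eq_zero_iff two_ne_zero, inv_eq_zero, (hs j).ne', or_false]
      using hzero
  rw [hB]
  rcases hcases with h | h
  · rw [h, mul_zero, zero_mul]
  · rw [mul_right_comm, sub_eq_zero.1 h, one_mul]

/-- `IsBiproportional M A` means that the matrix `A` is biproportional to `M`: it arises from `M`
by rescaling the rows and the columns with positive factors. -/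
def IsBiproportional (M A : ι → κ → K) : Prop :=
  ∃ u : ι → K, ∃ v : κ → K,
    (∀ i, 0 < u i) ∧ (∀ j, 0 < v j) ∧ ∀ i j, A i j = u i * M i j * v j

namespace IsBiproportional

variable {M A B : ι → κ → K}

theorem symm (h : IsBiproportional M A) : IsBiproportional A M := by
  obtain ⟨u, v, hu, hv, hA⟩ := h
  refine ⟨fun i ↦ (u i)⁻¹, fun j ↦ (v j)⁻¹, fun i ↦ inv_pos.2 (hu i), fun j ↦ inv_pos.2 (hv j),
    fun i j ↦ ?_⟩
  rw [hA, mul_assoc (u i), inv_mul_cancel_left₀ (hu i).ne', mul_inv_cancel_right₀ (hv j).ne']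

theorem trans (hA : IsBiproportional M A) (hB : IsBiproportional A B) : IsBiproportional M B := by
  obtain ⟨u, v, hu, hv, hA⟩ := hA
  obtain ⟨u', v', hu', hv', hB⟩ := hB
  refine ⟨fun i ↦ u' i * u i, fun j ↦ v j * v' j, fun i ↦ mul_pos (hu' i) (hu i),
    fun j ↦ mul_pos (hv j) (hv' j), fun i j ↦ ?_⟩
  rw [hB, hA]
  ring

theorem pos_iff (h : IsBiproportional M A) (i : ι) (j : κ) : 0 < A i j ↔ 0 < M i j := by
  obtain ⟨u, v, hu, hv, hA⟩ := h
  rw [hA, mul_pos_iff_of_pos_right (hv j), mul_pos_iff_of_pos_left (hu i)]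

theorem nonneg (h : IsBiproportional M A) (hM : ∀ i j, 0 ≤ M i j) (i : ι) (j : κ) :
    0 ≤ A i j := by
  obtain ⟨u, v, hu, hv, hA⟩ := h
  rw [hA]
  exact mul_nonneg (mul_nonneg (hu i).le (hM i j)) (hv j).le

theorem eq_of_sum_eq [Fintype ι] [Fintype κ] (hA : IsBiproportional M A)
    (hB : IsBiproportional M B) (hM : ∀ i j, 0 ≤ M i j)
    (hrow : ∀ i, ∑ j, B i j = ∑ j, A i j) (hcol : ∀ j, ∑ i, B i j = ∑ i, A i j) :
    B = A := by
  obtain ⟨r, s, -, hs, hBA⟩ := hA.symm.trans hB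
  exact eq_of_scaling_of_sum_eq (hA.nonneg hM) hs hBA hrow hcol

end IsBiproportional

theorem market_invariance_property_general [Fintype ι] [Fintype κ]
    {M A Ax : ι → κ → K} {a x' x ax : ι → K} {p' px : κ → K} (hM : ∀ i j, 0 ≤ M i j)
    (hx' : ∀ i, 0 < x' i) (hp' : ∀ j, 0 < p' j) (hA : ∀ i j, A i j = x' i * M i j * p' j)
    (hArow : ∀ i, ∑ j, A i j = a i) (hx : ∀ i, 0 < x i) (hax : ∀ i, ax i = x i * a i)
    (hpx : ∀ j, px j = ∑ i, x i * A i j) (hAx : ∀ i j, Ax i j = x i * A i j) :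
    (∑ i, ax i = ∑ j, px j) ∧
    (∀ i j, Ax i j = (x i * x' i) * M i j * p' j) ∧
    (∀ i j, 0 < Ax i j ↔ 0 < M i j) ∧
    (∀ i, ∑ j, Ax i j = ax i) ∧
    (∀ j, ∑ i, Ax i j = px j) ∧
    (∀ B : ι → κ → K, IsBiproportional M B →
      (∀ i, ∑ j, B i j = ax i) → (∀ j, ∑ i, B i j = px j) → B = Ax) := by
  have hform (i j) : Ax i j = (x i * x' i) * M i j * p' j := by
    rw [hAx, hA]
    ring
  have hbiprop : IsBiproportional M Ax :=
    ⟨fun i ↦ x i * x' i, p', fun i ↦ mul_pos (hx i) (hx' i), hp', hform⟩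
  have hrow (i) : ∑ j, Ax i j = ax i := by
    simp only [hAx, ← Finset.mul_sum, hArow, hax]
  have hcol (j) : ∑ i, Ax i j = px j := by
    simp only [hAx, hpx]
  have hsum : ∑ i, ax i = ∑ j, px j := by
    simp only [← hrow, ← hcol]
    exact Finset.sum_comm
  exact ⟨hsum, hform, hbiprop.pos_iff, hrow, hcol, fun B hB hBrow hBcol ↦
    hbiprop.eq_of_sum_eq hB hM (fun i ↦ (hBrow i).trans (hrow i).symm)
      fun j ↦ (hBcol j).trans (hcol j).symm⟩

end Field

/-- The market-invariance property of the market-invariant rebalancing process: if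
`A$` is the positive biproportional solution for `(M, a, p)` and a proportional market
movement `x` multiplies asset class `i` by `x_i`, then the moved totals
`a_x = x ⊙ a`, `p_{x,j} = ∑_i x_i A$_{ij}` again have equal sums, and the moved matrix
`(A$_x)_{ij} = x_i A$_{ij}` is biproportional to `M`, entrywise positive, has row sums
`a_x`, column sums `p_x`, and is the unique nonnegative biproportional solution of the
rebalancing problem `(M, a_x, p_x)` — so nothing is reallocated between portfolios. -/
theorem market_invariance_property
    (m n : ℕ) (M : Fin m → Fin n → ℝ) (hM : ∀ i j, 0 < M i j)
    (a : Fin m → ℝ) (p : Fin n → ℝ) (ha : ∀ i, 0 < a i) (hp : ∀ j, 0 < p j)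
    (hsum : ∑ i, a i = ∑ j, p j)
    (x' : Fin m → ℝ) (p' : Fin n → ℝ) (hx' : ∀ i, 0 < x' i) (hp' : ∀ j, 0 < p' j)
    (A : Fin m → Fin n → ℝ)
    (hA : ∀ i j, A i j = x' i * M i j * p' j)
    (hArow : ∀ i, ∑ j, A i j = a i)
    (hAcol : ∀ j, ∑ i, A i j = p j)
    (x : Fin m → ℝ) (hx : ∀ i, 0 < x i)
    (ax : Fin m → ℝ) (hax : ∀ i, ax i = x i * a i)
    (px : Fin n → ℝ) (hpx : ∀ j, px j = ∑ i, x i * A i j)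
    (Ax : Fin m → Fin n → ℝ) (hAx : ∀ i j, Ax i j = x i * A i j) :
    (∑ i, ax i = ∑ j, px j) ∧
    (∀ i j, Ax i j = (x i * x' i) * M i j * p' j) ∧
    (∀ i j, 0 < Ax i j) ∧
    (∀ i, ∑ j, Ax i j = ax i) ∧
    (∀ j, ∑ i, Ax i j = px j) ∧
    (∀ B : Fin m → Fin n → ℝ,
      (∀ i j, 0 ≤ B i j) →
      (∃ u : Fin m → ℝ, ∃ v : Fin n → ℝ,
        (∀ i, 0 < u i) ∧ (∀ j, 0 < v j) ∧ ∀ i j, B i j = u i * M i j * v j) →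
      (∀ i, ∑ j, B i j = ax i) →
      (∀ j, ∑ i, B i j = px j) →
      B = Ax) := by
  obtain ⟨hsum', hform, hpos, hrow, hcol, hunique⟩ :=
    market_invariance_property_general (fun i j ↦ (hM i j).le) hx' hp' hA hArow hx hax hpx hAx
  exact ⟨hsum', hform, fun i j ↦ (hpos i j).2 (hM i j), hrow, hcol, fun B _ ↦ hunique B⟩
end
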